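/- Let $T$ be a finite tree with vertex set $V$ of size $n$, and for each edge $\{A,B\}$ of $T$ let $d(A,B)$ and $d(B,A)$ be elements of a commutative ring. For arbitrary vertices $A, B$, define $d(A,B)$ as the product of $d(A_i, A_{i+1})$ along the unique path $A = A_1, \dots, A_k = B$ in $T$, with $d(A,A) = 1$. Then the determinant of the $n \times n$ matrix $(d(B,A))_{A,B \in V}$ equals $\prod_{\{A,B\} \in E(T)} (1 - d(A,B)\, d(B,A))$. -/

import Mathlib

/-! A leaf `v` of a connected graph hangs on a single neighbour `u`, so every geodesic leaving `v`
starts with the edge `vu`, and `d v w = d v u * d u w` for all `w ≠ v`. Subtracting `d v u` times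
the row of `u` from the row of `v` therefore leaves only the diagonal entry `1 - d v u * d u v`, and
the determinant is this factor times the determinant for the graph without `v`. A finite tree is
exhausted by removing leaves, and each removal uses up one edge. -/

theorem det_eq_mul_det_submatrix_of_row_eq_mul_off_diag {n R : Type*} [Fintype n] [DecidableEq n]
    [CommRing R] (M : Matrix n n R) {i k : n} (hik : i ≠ k) (c : R)
    (hrow : ∀ j ≠ i, M i j = c * M k j) :
    M.det = (M i i - c * M k i) *
      (M.submatrix ((↑) : ({i}ᶜ : Set n) → n) ((↑) : ({i}ᶜ : Set n) → n)).det := by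
  let N := M.updateRow i (M i + (-c) • M k)
  have hN_row : ∀ j, N i j = M i j - c * M k j := fun j => by simp [N, sub_eq_add_neg]
  have hN_det : N.det =
      (N.toSquareBlockProp (· = i)).det * (N.toSquareBlockProp (¬ · = i)).det := by
    convert! N.twoBlockTriangular_det' (· = i) fun _ hi j hj => by
      rw [hi, hN_row, hrow j hj, sub_self]
  have hN_corner : (N.toSquareBlockProp (· = i)).det = M i i - c * M k i := by
    rw [Matrix.det_unique, ← hN_row]
    rfl
  have hN_minor : N.toSquareBlockProp (¬ · = i) =
      M.submatrix ((↑) : {j // ¬ j = i} → n) ((↑) : {j // ¬ j = i} → n) := by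
    ext a b
    simp [N, Matrix.toSquareBlockProp_def, Matrix.updateRow_ne a.2]
  rw [← Matrix.det_updateRow_add_smul_self M hik (-c), hN_det, hN_corner, hN_minor]
  rfl

open SimpleGraph

section Leaf

variable {V : Type*} {G : SimpleGraph V}

theorem dist_induce_of_subsingleton_neighborSet {s : Set V}
    (hs : ∀ v ∉ s, (G.neighborSet v).Subsingleton) (a b : s) :
    (G.induce s).dist a b = G.dist a b := by
  by_cases hab : G.Reachable a b
  · obtain ⟨p, hp, hp_length⟩ := hab.exists_path_of_dist
    have hps : ∀ x ∈ p.support, x ∈ s := fun x hxp => by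
      by_contra hxs
      exact hp.isTrail.not_mem_support_of_subsingleton_neighborSet
        (ne_of_mem_of_not_mem a.2 hxs).symm (ne_of_mem_of_not_mem b.2 hxs).symm
        (hs x hxs) hxp
    let q : (G.induce s).Walk a b := p.induce s hps
    have hq_length : q.length = p.length := by
      rw [← Walk.length_map (Embedding.induce s).toHom q]
      exact congrArg Walk.length (p.map_induce hps)
    obtain ⟨r, hr_length⟩ := q.reachable.exists_walk_length_eq_dist
    apply le_antisymm
    · exact (dist_le q).trans_eq (hq_length.trans hp_length)
    · rw [← hr_length, ← Walk.length_map (Embedding.induce s).toHom r]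
      exact dist_le _
  · have hab' : ¬ (G.induce s).Reachable a b := fun h => hab (h.map (Embedding.induce s).toHom)
    rw [dist_eq_zero_of_not_reachable hab, dist_eq_zero_of_not_reachable hab']

theorem exists_neighborSet_eq_singleton_and_isTree_induce_compl [Finite V] [Nontrivial V]
    (hG : G.IsTree) : ∃ u v, G.neighborSet v = {u} ∧ (G.induce {v}ᶜ).IsTree := by
  classical
  have := Fintype.ofFinite V
  obtain ⟨v, hv⟩ := hG.exists_vert_degree_one_of_nontrivial
  obtain ⟨u, hvu, hu⟩ := degree_eq_one_iff_existsUnique_adj.1 hv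
  exact ⟨u, v, Set.eq_singleton_iff_unique_mem.2 ⟨hvu, hu⟩,
    hG.connected.induce_compl_singleton_of_degree_eq_one hv, hG.isAcyclic.induce _⟩

variable {u v : V}

theorem dist_add_dist_of_neighborSet_eq_singleton (hv : G.neighborSet v = {u}) {w : V}
    (hvw : G.Reachable v w) (hne : w ≠ v) : G.dist v u + G.dist u w = G.dist v w := by
  have hadj : G.Adj v u := by simp [← mem_neighborSet, hv]
  obtain ⟨p, hp⟩ := hvw.exists_walk_length_eq_dist
  cases p with
  | nil => exact absurd rfl hne
  | @cons _ x _ hvx q =>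
    obtain rfl : x = u := by simpa [hv] using (G.mem_neighborSet v x).2 hvx
    have hq : G.dist x w ≤ q.length := dist_le q
    have htri : G.dist v w ≤ G.dist v x + G.dist x w := hadj.reachable.dist_triangle_left w
    rw [Walk.length_cons] at hp
    rw [dist_eq_one_iff_adj.2 hadj] at htri ⊢
    omega

theorem prod_edgeFinset_of_neighborSet_eq_singleton {M : Type*} [CommMonoid M] [Fintype V]
    [DecidableEq V] [DecidableRel G.Adj] (hv : G.neighborSet v = {u}) (f : Sym2 V → M) :
    ∏ e ∈ G.edgeFinset, f e =
      f s(v, u) * ∏ e ∈ (G.induce {v}ᶜ).edgeFinset, f (e.map (↑)) := by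
  have hadj : ∀ x, G.Adj v x ↔ x = u := fun x => by rw [← mem_neighborSet, hv]; rfl
  have hedges : G.edgeFinset = insert s(v, u)
      ((G.induce {v}ᶜ).edgeFinset.map
        (Function.Embedding.subtype (· ∈ ({v}ᶜ : Set V))).sym2Map) := by
    rw [map_edgeFinset_induce]
    ext e
    induction e using Sym2.ind with
    | _ a b =>
      have hva := G.adj_comm a v
      simp only [mem_edgeFinset, mem_edgeSet, Finset.mem_insert, Finset.mem_inter,
        Finset.mk_mem_sym2_iff, Set.mem_toFinset, Set.mem_compl_singleton_iff, Sym2.eq_iff]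
      grind
  rw [hedges, Finset.prod_insert, Finset.prod_map]
  · rfl
  · rw [map_edgeFinset_induce]
    simp

end Leaf

/-- The factor `1 - d A B * d B A` which the edge `s(A, B)` contributes to the determinant, as a
function on unordered pairs. -/
def edgeFactor {V R : Type*} [CommRing R] (d : V → V → R) : Sym2 V → R :=
  Sym2.lift ⟨fun A B => 1 - d A B * d B A, fun A B => by ring⟩

theorem edgeFactor_map {V W R : Type*} [CommRing R] (d : V → V → R) (f : W → V) (e : Sym2 W) :
    edgeFactor d (e.map f) = edgeFactor (fun a b => d (f a) (f b)) e := by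
  induction e using Sym2.ind with
  | _ a b => rfl

/-- A multiplicative distance on `G`, possibly asymmetric: `d` is `1` on the diagonal and
multiplicative along geodesics. On a tree this says that `d A B` is the product of the weights of
the directed edges on the path from `A` to `B`. -/
structure IsMultiplicativeDist {V R : Type*} [MulOneClass R] (G : SimpleGraph V) (d : V → V → R) :
    Prop where
  self : ∀ A, d A A = 1
  mul : ∀ A B C, G.dist A C + G.dist C B = G.dist A B → d A B = d A C * d C B

namespace IsMultiplicativeDist

variable {V : Type*} {G : SimpleGraph V}

theorem comap_of_dist_eq {R W : Type*} [MulOneClass R] {d : V → V → R}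
    (hd : IsMultiplicativeDist G d) {H : SimpleGraph W} (f : W → V)
    (hf : ∀ a b, H.dist a b = G.dist (f a) (f b)) :
    IsMultiplicativeDist H fun a b => d (f a) (f b) where
  self a := hd.self (f a)
  mul a b c habc := hd.mul (f a) (f b) (f c) (by simpa only [hf] using habc)

theorem det_eq_edgeFactor_mul_det_compl_singleton {R : Type*} [CommRing R] [Fintype V]
    [DecidableEq V] {d : V → V → R} (hd : IsMultiplicativeDist G d) (hG : G.Connected) {u v : V}
    (hv : G.neighborSet v = {u}) :
    (Matrix.of d).det =
      edgeFactor d s(v, u) * (Matrix.of fun a b : ({v}ᶜ : Set V) => d a b).det := by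
  have hvu : v ≠ u := Adj.ne (G := G) (by simp [← mem_neighborSet, hv])
  have hrow : ∀ w ≠ v, d v w = d v u * d u w := fun w hw =>
    hd.mul v w u (dist_add_dist_of_neighborSet_eq_singleton hv (hG v w) hw)
  rw [det_eq_mul_det_submatrix_of_row_eq_mul_off_diag (Matrix.of d) hvu (d v u) hrow]
  simp only [Matrix.of_apply, hd.self]
  rfl

end IsMultiplicativeDist

theorem stmt_7 {R : Type*} [CommRing R] {V : Type*} [Fintype V] [DecidableEq V]
    (G : SimpleGraph V) [DecidableRel G.Adj] (hT : G.IsTree)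
    (d : V → V → R)
    (hrefl : ∀ A, d A A = 1)
    (hmul : ∀ A B C : V, G.dist A C + G.dist C B = G.dist A B → d A B = d A C * d C B) :
    (Matrix.of fun A B : V => d B A).det =
      ∏ e ∈ G.edgeFinset,
        Sym2.lift ⟨fun A B => 1 - d A B * d B A, fun A B => by ring⟩ e := by
  have hd : IsMultiplicativeDist G d := ⟨hrefl, hmul⟩
  clear hrefl hmul
  change (Matrix.of d).transpose.det = ∏ e ∈ G.edgeFinset, edgeFactor d e
  rw [Matrix.det_transpose]
  induction hn : Fintype.card V using Nat.strong_induction_on generalizing V with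
  | _ n ih =>
    cases subsingleton_or_nontrivial V with
    | inl _ =>
      obtain ⟨r⟩ := hT.connected.nonempty
      have hE : G.edgeFinset = ∅ := edgeFinset_eq_empty.2 (Subsingleton.elim G ⊥)
      rw [hE, Finset.prod_empty, Matrix.det_eq_elem_of_subsingleton _ r, Matrix.of_apply, hd.self]
    | inr _ =>
      obtain ⟨u, v, hv, hT'⟩ := exists_neighborSet_eq_singleton_and_isTree_induce_compl hT
      have hdist : ∀ a b : ({v}ᶜ : Set V), (G.induce {v}ᶜ).dist a b = G.dist a b :=
        dist_induce_of_subsingleton_neighborSet (by simp [hv])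
      have hcard : Fintype.card ({v}ᶜ : Set V) < n :=
        hn ▸ Fintype.card_subtype_lt (x := v) (by simp)
      rw [hd.det_eq_edgeFactor_mul_det_compl_singleton hT.connected hv,
        prod_edgeFinset_of_neighborSet_eq_singleton hv,
        ih _ hcard (G.induce {v}ᶜ) hT' _ (hd.comap_of_dist_eq (↑) hdist) rfl]
      simp only [edgeFactor_map]
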